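/- arXiv:1511.00960 — 2 statements merged into one kernel-verified Lean document; each statement's English description precedes it below -/
import Mathlib

section
/- The position vector of M satisfies Δ^{II} x = −(1/(2K)) ∇^{III}(K, n) − 2n on U. -/
open Matrix

noncomputable section

/-- The parameter domain `ℝ²`. -/
abbrev Param : Type := Fin 2 → ℝ

/-- Vectors in Euclidean 3-space. -/
abbrev Vec3 : Type := Fin 3 → ℝ

/-- Partial derivative of a vector-valued function in the `i`-th coordinate direction. -/
noncomputable def pd (i : Fin 2) (f : Param → Vec3) (u : Param) : Vec3 :=
  fderiv ℝ f u (Pi.single i 1)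

/-- Partial derivative of a scalar function in the `i`-th coordinate direction. -/
noncomputable def pds (i : Fin 2) (f : Param → ℝ) (u : Param) : ℝ :=
  fderiv ℝ f u (Pi.single i 1)

/-- The Euclidean inner product on `ℝ³`. -/
def dot3 (a b : Vec3) : ℝ := ∑ k, a k * b k

/-- The Euclidean norm on `ℝ³`. -/
noncomputable def norm3 (a : Vec3) : ℝ := Real.sqrt (dot3 a a)

/-- The Gauss map `n = (x_{/1} × x_{/2}) / ‖x_{/1} × x_{/2}‖`. -/
noncomputable def gaussMap (x : Param → Vec3) (u : Param) : Vec3 :=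
  (norm3 (crossProduct (pd 0 x u) (pd 1 x u)))⁻¹ • crossProduct (pd 0 x u) (pd 1 x u)

/-- Components `g_{ij}` of the first fundamental form. -/
noncomputable def fformI (x : Param → Vec3) (u : Param) : Matrix (Fin 2) (Fin 2) ℝ :=
  Matrix.of fun i j => dot3 (pd i x u) (pd j x u)

/-- Components `b_{ij} = ⟨∂²x/∂u^i∂u^j, n⟩` of the second fundamental form. -/
noncomputable def fformII (x : Param → Vec3) (u : Param) : Matrix (Fin 2) (Fin 2) ℝ :=
  Matrix.of fun i j => dot3 (pd i (pd j x) u) (gaussMap x u)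

/-- Components `e_{ij} = ⟨n_{/i}, n_{/j}⟩` of the third fundamental form. -/
noncomputable def fformIII (x : Param → Vec3) (u : Param) : Matrix (Fin 2) (Fin 2) ℝ :=
  Matrix.of fun i j => dot3 (pd i (gaussMap x) u) (pd j (gaussMap x) u)

/-- The Gauss curvature `K = det(b_{ij}) / det(g_{ij})`. -/
noncomputable def gaussCurv (x : Param → Vec3) (u : Param) : ℝ :=
  (fformII x u).det / (fformI x u).det

/-- The mean curvature `H = (1/2) g^{ij} b_{ij}`. -/
noncomputable def meanCurv (x : Param → Vec3) (u : Param) : ℝ :=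
  (1 / 2) * ∑ i, ∑ j, (fformI x u)⁻¹ i j * fformII x u i j

/-- First Beltrami operator `∇^J(φ, ψ) = a^{ij} φ_{/i} ψ_{/j}` with respect to the
fundamental form with component matrix `a`, for scalar `φ` and `ℝ³`-valued `ψ`. -/
noncomputable def beltrami1 (a : Param → Matrix (Fin 2) (Fin 2) ℝ)
    (φ : Param → ℝ) (ψ : Param → Vec3) (u : Param) : Vec3 :=
  ∑ i, ∑ j, ((a u)⁻¹ i j * pds i φ u) • pd j ψ u

/-- Second Beltrami operator
`Δ^J f = −(1/√|det a|) ∂_i (√|det a| a^{ij} ∂_j f)` with respect to the fundamental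
form with component matrix `a`, acting componentwise on `ℝ³`-valued functions. -/
noncomputable def beltrami2 (a : Param → Matrix (Fin 2) (Fin 2) ℝ)
    (f : Param → Vec3) (u : Param) : Vec3 :=
  -((Real.sqrt |(a u).det|)⁻¹ •
    ∑ i, ∑ j, pd i (fun v => (Real.sqrt |(a v).det| * (a v)⁻¹ i j) • pd j f v) u)

/-- `x` is an immersion on `U`: the partial derivatives are linearly independent. -/
def Immersed (x : Param → Vec3) (U : Set Param) : Prop :=
  ∀ u ∈ U, LinearIndependent ℝ ![pd 0 x u, pd 1 x u]

/-- `f` is nonconstant on `U`. -/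
def NonconstOn (f : Param → Vec3) (U : Set Param) : Prop :=
  ¬ ∃ v : Vec3, ∀ u ∈ U, f u = v


theorem pd_congr' {i : Fin 2} {f h : Param → Vec3} {u : Param} (e : f =ᶠ[nhds u] h) :
    pd i f u = pd i h u := by
  unfold pd; rw [e.fderiv_eq]

theorem pds_congr' {i : Fin 2} {f h : Param → ℝ} {u : Param} (e : f =ᶠ[nhds u] h) :
    pds i f u = pds i h u := by
  unfold pds; rw [e.fderiv_eq]

theorem pd_smul' (i : Fin 2) {f : Param → ℝ} {h : Param → Vec3} {u : Param}
    (hf : DifferentiableAt ℝ f u) (hh : DifferentiableAt ℝ h u) :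
    pd i (fun v => f v • h v) u = f u • pd i h u + pds i f u • h u := by
  unfold pd pds
  rw [fderiv_fun_smul hf hh]
  simp

theorem pds_mul' (i : Fin 2) {f h : Param → ℝ} {u : Param}
    (hf : DifferentiableAt ℝ f u) (hh : DifferentiableAt ℝ h u) :
    pds i (fun v => f v * h v) u = f u * pds i h u + h u * pds i f u := by
  unfold pds
  rw [fderiv_fun_mul hf hh]
  simp

theorem pds_sub' (i : Fin 2) {f h : Param → ℝ} {u : Param}
    (hf : DifferentiableAt ℝ f u) (hh : DifferentiableAt ℝ h u) :
    pds i (fun v => f v - h v) u = pds i f u - pds i h u := by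
  unfold pds
  rw [fderiv_fun_sub hf hh]
  simp

theorem pds_neg' (i : Fin 2) {f : Param → ℝ} {u : Param} :
    pds i (fun v => - f v) u = - pds i f u := by
  unfold pds
  rw [fderiv_fun_neg]
  simp

theorem pds_const' (i : Fin 2) (c : ℝ) (u : Param) : pds i (fun _ => c) u = 0 := by
  unfold pds; simp

theorem pd_apply' (i : Fin 2) {f : Param → Vec3} {u : Param}
    (hf : DifferentiableAt ℝ f u) (k : Fin 3) :
    pds i (fun v => f v k) u = pd i f u k := by
  unfold pd pds
  rw [fderiv_apply hf]
  simp

theorem dot3_eq (a b : Vec3) : dot3 a b = a 0 * b 0 + a 1 * b 1 + a 2 * b 2 := by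
  simp [dot3, Fin.sum_univ_three]

theorem contDiffAt_comp' {f : Param → Vec3} {u : Param} (hf : ContDiffAt ℝ (⊤ : ℕ∞) f u)
    (k : Fin 3) : ContDiffAt ℝ (⊤ : ℕ∞) (fun v => f v k) u :=
  (contDiffAt_pi.1 hf) k

theorem contDiffAt_dot3 {f h : Param → Vec3} {u : Param} (hf : ContDiffAt ℝ (⊤ : ℕ∞) f u)
    (hh : ContDiffAt ℝ (⊤ : ℕ∞) h u) :
    ContDiffAt ℝ (⊤ : ℕ∞) (fun v => dot3 (f v) (h v)) u := by
  unfold dot3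
  exact ContDiffAt.sum fun k _ => (contDiffAt_comp' hf k).mul (contDiffAt_comp' hh k)

theorem pds_dot3 (i : Fin 2) {f h : Param → Vec3} {u : Param}
    (hf : DifferentiableAt ℝ f u) (hh : DifferentiableAt ℝ h u) :
    pds i (fun v => dot3 (f v) (h v)) u = dot3 (pd i f u) (h u) + dot3 (f u) (pd i h u) := by
  have hf' : ∀ k, DifferentiableAt ℝ (fun v => f v k) u := fun k => differentiableAt_pi.1 hf k
  have hh' : ∀ k, DifferentiableAt ℝ (fun v => h v k) u := fun k => differentiableAt_pi.1 hh k
  have : pds i (fun v => dot3 (f v) (h v)) u = ∑ k, pds i (fun v => f v k * h v k) u := by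
    unfold pds dot3
    rw [fderiv_fun_sum (A := fun k v => f v k * h v k) (fun k _ => (hf' k).mul (hh' k))]
    simp
  rw [this]
  simp only [fun k => pds_mul' i (hf' k) (hh' k), pd_apply' i hf, pd_apply' i hh, dot3]
  rw [← Finset.sum_add_distrib]
  exact Finset.sum_congr rfl fun k _ => by ring

theorem contDiffAt_pd (i : Fin 2) {f : Param → Vec3} {u : Param}
    (hf : ContDiffAt ℝ (⊤ : ℕ∞) f u) : ContDiffAt ℝ (⊤ : ℕ∞) (pd i f) u := by
  unfold pd
  exact (hf.fderiv_right (m := (⊤ : ℕ∞)) (by simp)).clm_apply contDiffAt_const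

theorem pd_comm' (i j : Fin 2) {f : Param → Vec3} {u : Param}
    (hf : ContDiffAt ℝ (⊤ : ℕ∞) f u) : pd i (pd j f) u = pd j (pd i f) u := by
  have hd : DifferentiableAt ℝ (fderiv ℝ f) u :=
    (hf.fderiv_right (m := (⊤ : ℕ∞)) (by simp)).differentiableAt (by simp)
  have key : ∀ i j : Fin 2, pd i (pd j f) u
      = fderiv ℝ (fderiv ℝ f) u (Pi.single i 1) (Pi.single j 1) := by
    intro i j
    unfold pd
    rw [fderiv_clm_apply hd (differentiableAt_const _)]
    simp
  have hs : IsSymmSndFDerivAt ℝ f u := hf.isSymmSndFDerivAt (by simp; exact WithTop.coe_le_coe.2 (le_top : (2 : ℕ∞) ≤ ⊤))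
  rw [key, key]
  exact hs _ _

theorem lagrange3 (a c : Vec3) : dot3 (crossProduct a c) (crossProduct a c)
    = dot3 a a * dot3 c c - dot3 a c * dot3 c a := by
  simp [dot3_eq, cross_apply]; ring

theorem decomp3 (a c v : Vec3) :
    (dot3 a a * dot3 c c - dot3 a c * dot3 c a) • v
     = (dot3 v a * dot3 c c - dot3 v c * dot3 a c) • a
      + (dot3 v c * dot3 a a - dot3 v a * dot3 a c) • c
      + (dot3 v (crossProduct a c)) • crossProduct a c := by
  ext k
  fin_cases k <;> simp [dot3_eq, cross_apply] <;> ring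

theorem dot3_smul_right (r : ℝ) (a b : Vec3) : dot3 a (r • b) = r * dot3 a b := by
  simp [dot3_eq]; ring
theorem dot3_smul_left (r : ℝ) (a b : Vec3) : dot3 (r • a) b = r * dot3 a b := by
  simp [dot3_eq]; ring
theorem dot3_add_left (a b c : Vec3) : dot3 (a + b) c = dot3 a c + dot3 b c := by
  simp [dot3_eq]; ring
theorem dot3_comm' (a b : Vec3) : dot3 a b = dot3 b a := by
  simp [dot3_eq]; ring

theorem dot3_pos {a : Vec3} (h : a ≠ 0) : 0 < dot3 a a := by
  rcases (lt_or_eq_of_le (show 0 ≤ dot3 a a by rw [dot3_eq]; nlinarith [mul_self_nonneg (a 0), mul_self_nonneg (a 1), mul_self_nonneg (a 2)])) with h1 | h1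
  · exact h1
  · exfalso; apply h
    rw [dot3_eq] at h1
    ext k
    fin_cases k <;> simp <;> nlinarith [sq_nonneg (a 0), sq_nonneg (a 1), sq_nonneg (a 2)]

/-- Frame decomposition. -/
theorem frame_exists {a c n : Vec3} (hw : crossProduct a c ≠ 0)
    (hn : n = (norm3 (crossProduct a c))⁻¹ • crossProduct a c) (v : Vec3) :
    ∃ p q : ℝ, v = p • a + q • c + dot3 v n • n := by
  have hG := dot3_pos hw
  have hd := decomp3 a c v
  rw [← lagrange3] at hd
  set w := crossProduct a c with hwdef
  have hnorm : (norm3 w)⁻¹ * (norm3 w)⁻¹ = (dot3 w w)⁻¹ := by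
    unfold norm3
    rw [← mul_inv, Real.mul_self_sqrt hG.le]
  refine ⟨(dot3 w w)⁻¹ * (dot3 v a * dot3 c c - dot3 v c * dot3 a c),
    (dot3 w w)⁻¹ * (dot3 v c * dot3 a a - dot3 v a * dot3 a c), ?_⟩
  rw [hn, dot3_smul_right]
  have h2 : v = (dot3 w w)⁻¹ • (dot3 w w • v) := by
    rw [smul_smul, inv_mul_cancel₀ hG.ne', one_smul]
  have h3 : ((norm3 w)⁻¹ * dot3 v w) • (norm3 w)⁻¹ • w = (dot3 w w)⁻¹ • (dot3 v w) • w := by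
    rw [smul_smul, smul_smul, ← hnorm]; congr 1; ring
  rw [h3]
  conv_lhs => rw [h2, hd]
  simp only [smul_add, smul_smul]

theorem gauss_unit {x : Param → Vec3} {u : Param}
    (hw : crossProduct (pd 0 x u) (pd 1 x u) ≠ 0) : dot3 (gaussMap x u) (gaussMap x u) = 1 := by
  have hG := dot3_pos hw
  unfold gaussMap norm3
  rw [dot3_smul_left, dot3_smul_right, ← mul_assoc, ← mul_inv, Real.mul_self_sqrt hG.le,
    inv_mul_cancel₀ hG.ne']

theorem gauss_orth (x : Param → Vec3) (u : Param) (j : Fin 2) :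
    dot3 (pd j x u) (gaussMap x u) = 0 := by
  unfold gaussMap
  rw [dot3_smul_right]
  fin_cases j <;> simp [dot3_eq, cross_apply] <;> right <;> ring

theorem gauss_smooth {x : Param → Vec3} {u : Param} (hx : ContDiffAt ℝ (⊤ : ℕ∞) x u)
    (hw : crossProduct (pd 0 x u) (pd 1 x u) ≠ 0) :
    ContDiffAt ℝ (⊤ : ℕ∞) (gaussMap x) u := by
  have hG := dot3_pos hw
  have h0 := contDiffAt_comp' (contDiffAt_pd 0 hx)
  have h1 := contDiffAt_comp' (contDiffAt_pd 1 hx)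
  have hc : ContDiffAt ℝ (⊤ : ℕ∞) (fun v => crossProduct (pd 0 x v) (pd 1 x v)) u := by
    rw [contDiffAt_pi]
    intro k
    fin_cases k <;> simp [cross_apply]
    · exact ((h0 1).mul (h1 2)).sub ((h0 2).mul (h1 1))
    · exact ((h0 2).mul (h1 0)).sub ((h0 0).mul (h1 2))
    · exact ((h0 0).mul (h1 1)).sub ((h0 1).mul (h1 0))
  unfold gaussMap norm3
  exact (((contDiffAt_dot3 hc hc).sqrt hG.ne').inv (Real.sqrt_pos.2 hG).ne').smul hc

theorem matrix_aux (e N b g : Matrix (Fin 2) (Fin 2) ℝ) (he : e = -(N * b)) (hb : b = -(N * g))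
    (hD : b.det ≠ 0) : e⁻¹ * N = -b⁻¹ := by
  have hN : N.det ≠ 0 := by
    intro h
    apply hD
    rw [hb, ← Matrix.neg_mul, Matrix.det_mul]
    simp [Matrix.det_neg, h]
  have hNu : IsUnit N.det := isUnit_iff_ne_zero.2 hN
  have hbu : IsUnit b.det := isUnit_iff_ne_zero.2 hD
  have : e⁻¹ = -(b⁻¹ * N⁻¹) := by
    apply Matrix.inv_eq_left_inv
    rw [he, neg_mul_neg, Matrix.mul_assoc, ← Matrix.mul_assoc N⁻¹,
      Matrix.nonsing_inv_mul _ hNu, Matrix.one_mul, Matrix.nonsing_inv_mul _ hbu]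
  rw [this, Matrix.neg_mul, Matrix.mul_assoc, Matrix.nonsing_inv_mul _ hNu, Matrix.mul_one]

theorem inv_two (b : Matrix (Fin 2) (Fin 2) ℝ) (i j : Fin 2) :
    b⁻¹ i j = (b.det)⁻¹ * b.adjugate i j := by
  rw [Matrix.inv_def, Ring.inverse_eq_inv']; simp

/-- `∇^{III}(φ, n) = -b^{ij} φ_i x_j`. -/
theorem beltrami1_III {x : Param → Vec3} {u : Param} (φ : Param → ℝ)
    (hw : crossProduct (pd 0 x u) (pd 1 x u) ≠ 0)
    (hD : (fformII x u).det ≠ 0)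
    (horth : ∀ i, dot3 (pd i (gaussMap x) u) (gaussMap x u) = 0)
    (hwein : ∀ i j, dot3 (pd i (pd j x) u) (gaussMap x u)
      = - dot3 (pd i (gaussMap x) u) (pd j x u))
    (hsymm : pd 0 (pd 1 x) u = pd 1 (pd 0 x) u) :
    beltrami1 (fformIII x) φ (gaussMap x) u
      = -∑ i, ∑ j, ((fformII x u)⁻¹ i j * pds i φ u) • pd j x u := by
  have hfr : ∀ i, ∃ p : Fin 2 → ℝ, pd i (gaussMap x) u = p 0 • pd 0 x u + p 1 • pd 1 x u := by
    intro i
    obtain ⟨p, q, h⟩ := frame_exists (n := gaussMap x u) hw rfl (pd i (gaussMap x) u)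
    rw [horth, zero_smul, add_zero] at h
    exact ⟨![p, q], h⟩
  choose N hN using hfr
  have hbs : fformII x u 0 1 = fformII x u 1 0 := by
    simp only [fformII, Matrix.of_apply, hsymm]
  have hb : ∀ i j, fformII x u i j = -(N i 0 * fformI x u 0 j + N i 1 * fformI x u 1 j) := by
    intro i j
    simp only [fformII, fformI, Matrix.of_apply]
    rw [hwein, hN i, dot3_add_left, dot3_smul_left, dot3_smul_left]
  have he : ∀ i j, fformIII x u i j = -(N i 0 * fformII x u 0 j + N i 1 * fformII x u 1 j) := by
    intro i j
    have h1 : ∀ l, dot3 (pd l x u) (pd j (gaussMap x) u) = - fformII x u j l := by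
      intro l
      rw [dot3_comm']
      simp only [fformII, Matrix.of_apply, hwein, neg_neg]
    have h2 : ∀ l, fformII x u j l = fformII x u l j := by
      intro l; fin_cases j <;> fin_cases l <;> simp [hbs]
    simp only [fformIII, Matrix.of_apply]
    conv_lhs => rw [hN i, dot3_add_left, dot3_smul_left, dot3_smul_left, h1, h1, h2, h2]
    ring
  have hM := matrix_aux (fformIII x u) (Matrix.of N) (fformII x u) (fformI x u)
    (by ext i j; simp [Matrix.mul_apply, Fin.sum_univ_two, he i j])
    (by ext i j; simp [Matrix.mul_apply, Fin.sum_univ_two, hb i j]) hD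
  have hMe : ∀ i j, (fformIII x u)⁻¹ i 0 * N 0 j + (fformIII x u)⁻¹ i 1 * N 1 j
      = -((fformII x u)⁻¹ i j) := by
    intro i j
    have := congrFun (congrFun hM i) j
    simpa [Matrix.mul_apply, Fin.sum_univ_two] using this
  unfold beltrami1
  simp only [Fin.sum_univ_two, hN]
  ext k
  simp only [Pi.add_apply, Pi.smul_apply, Pi.neg_apply, smul_eq_mul]
  linear_combination pds 0 φ u * pd 0 x u k * hMe 0 0 + pds 0 φ u * pd 1 x u k * hMe 0 1
    + pds 1 φ u * pd 0 x u k * hMe 1 0 + pds 1 φ u * pd 1 x u k * hMe 1 1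
/-- `Δ^{II} x = −(1/(2K)) ∇^{III}(K, n) − 2n` on `U`. -/
theorem stmt3 (U : Set Param) (x : Param → Vec3)
    (hU : IsOpen U) (hUconn : IsConnected U)
    (hx : ContDiffOn ℝ (⊤ : ℕ∞) x U) (himm : Immersed x U)
    (hell : ∀ u ∈ U, (fformII x u).PosDef) :
    ∀ u ∈ U,
      beltrami2 (fformII x) x u =
        -((1 / (2 * gaussCurv x u)) • beltrami1 (fformIII x) (gaussCurv x) (gaussMap x) u)
          - (2 : ℝ) • gaussMap x u := by
  intro u hu
  have hX : ∀ v ∈ U, ContDiffAt ℝ (⊤ : ℕ∞) x v := fun v hv => hx.contDiffAt (hU.mem_nhds hv)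
  have hW : ∀ v ∈ U, crossProduct (pd 0 x v) (pd 1 x v) ≠ 0 := fun v hv =>
    crossProduct_ne_zero_iff_linearIndependent.2 (himm v hv)
  have hev : ∀ᶠ v in nhds u, v ∈ U := hU.mem_nhds hu
  have hxu := hX u hu
  have hn := gauss_smooth hxu (hW u hu)
  have hnd : DifferentiableAt ℝ (gaussMap x) u := hn.differentiableAt (by simp)
  have hpx : ∀ i, ContDiffAt ℝ (⊤ : ℕ∞) (pd i x) u := fun i => contDiffAt_pd i hxu
  have hpd : ∀ i, DifferentiableAt ℝ (pd i x) u := fun i => (hpx i).differentiableAt (by simp)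
  have hppd : ∀ i j, DifferentiableAt ℝ (pd i (pd j x)) u :=
    fun i j => (contDiffAt_pd i (hpx j)).differentiableAt (by simp)
  have horth : ∀ i, dot3 (pd i (gaussMap x) u) (gaussMap x u) = 0 := by
    intro i
    have h := pds_dot3 i hnd hnd
    have h2 : pds i (fun v => dot3 (gaussMap x v) (gaussMap x v)) u = 0 := by
      rw [pds_congr' (h := fun _ => 1) (hev.mono fun v hv => gauss_unit (hW v hv)), pds_const']
    rw [h2, dot3_comm' (gaussMap x u)] at h
    linarith
  have hwein : ∀ i j, dot3 (pd i (pd j x) u) (gaussMap x u)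
      = - dot3 (pd i (gaussMap x) u) (pd j x u) := by
    intro i j
    have h := pds_dot3 i (hpd j) hnd
    have h2 : pds i (fun v => dot3 (pd j x v) (gaussMap x v)) u = 0 := by
      simp only [gauss_orth, pds_const']
    rw [h2, dot3_comm' (pd j x u)] at h
    linarith
  have hsymm : pd 0 (pd 1 x) u = pd 1 (pd 0 x) u := pd_comm' 0 1 hxu
  have hBsymm : ∀ v ∈ U, fformII x v 1 0 = fformII x v 0 1 := by
    intro v hv
    simp only [fformII, Matrix.of_apply, pd_comm' 0 1 (hX v hv)]
  have hBd : ∀ i j, DifferentiableAt ℝ (fun v => fformII x v i j) u := fun i j =>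
    (contDiffAt_dot3 (contDiffAt_pd i (hpx j)) hn).differentiableAt (by simp)
  have hGd : ∀ i j, DifferentiableAt ℝ (fun v => fformI x v i j) u := fun i j =>
    (contDiffAt_dot3 (hpx i) (hpx j)).differentiableAt (by simp)
  have hBp : ∀ k i j, pds k (fun v => fformII x v i j) u
      = dot3 (pd k (pd i (pd j x)) u) (gaussMap x u)
        + dot3 (pd i (pd j x) u) (pd k (gaussMap x) u) := fun k i j =>
    pds_dot3 k (hppd i j) hnd
  have hGp : ∀ k i j, pds k (fun v => fformI x v i j) u
      = dot3 (pd k (pd i x) u) (pd j x u) + dot3 (pd i x u) (pd k (pd j x) u) := fun k i j =>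
    pds_dot3 k (hpd i) (hpd j)
  have hBps : ∀ k, pds k (fun v => fformII x v 1 0) u = pds k (fun v => fformII x v 0 1) u :=
    fun k => pds_congr' (hev.mono hBsymm)
  have hcod1 : pds 1 (fun v => fformII x v 0 0) u - pds 0 (fun v => fformII x v 0 1) u
      = dot3 (pd 0 (pd 0 x) u) (pd 1 (gaussMap x) u)
        - dot3 (pd 0 (pd 1 x) u) (pd 0 (gaussMap x) u) := by
    rw [← hBps 0, hBp, hBp, pd_comm' 1 0 (hpx 0), hsymm]; ring
  have hcod2 : pds 0 (fun v => fformII x v 1 1) u - pds 1 (fun v => fformII x v 0 1) u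
      = dot3 (pd 1 (pd 1 x) u) (pd 0 (gaussMap x) u)
        - dot3 (pd 0 (pd 1 x) u) (pd 1 (gaussMap x) u) := by
    rw [hBp, hBp, pd_comm' 1 0 (hpx 1)]; ring
  have hDpos : ∀ v ∈ U, 0 < (fformII x v).det := fun v hv => (hell v hv).det_pos
  have hD := hDpos u hu
  have hG : 0 < (fformI x u).det := by
    rw [Matrix.det_fin_two]
    simp only [fformI, Matrix.of_apply]
    rw [← lagrange3]
    exact dot3_pos (hW u hu)
  have hmul : ∀ {f h : Param → ℝ}, DifferentiableAt ℝ f u → DifferentiableAt ℝ h u →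
      DifferentiableAt ℝ (fun v => f v * h v) u := fun hf hh => hf.mul hh
  have hDd : DifferentiableAt ℝ (fun v => (fformII x v).det) u := by
    simp only [Matrix.det_fin_two]
    exact ((hBd 0 0).mul (hBd 1 1)).sub ((hBd 0 1).mul (hBd 1 0))
  have hGGd : DifferentiableAt ℝ (fun v => (fformI x v).det) u := by
    simp only [Matrix.det_fin_two]
    exact ((hGd 0 0).mul (hGd 1 1)).sub ((hGd 0 1).mul (hGd 1 0))
  -- derivative of det g
  have hGdet : ∀ k, pds k (fun v => (fformI x v).det) u
      = fformI x u 0 0 * pds k (fun v => fformI x v 1 1) u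
        + fformI x u 1 1 * pds k (fun v => fformI x v 0 0) u
        - (fformI x u 0 1 * pds k (fun v => fformI x v 1 0) u
        + fformI x u 1 0 * pds k (fun v => fformI x v 0 1) u) := by
    intro k
    simp only [Matrix.det_fin_two]
    rw [pds_sub' k (hmul (hGd 0 0) (hGd 1 1)) (hmul (hGd 0 1) (hGd 1 0)),
      pds_mul' k (hGd 0 0) (hGd 1 1), pds_mul' k (hGd 0 1) (hGd 1 0)]
  -- derivative of K
  have hK : ∀ k, pds k (gaussCurv x) u * (fformI x u).det
      = pds k (fun v => (fformII x v).det) u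
        - gaussCurv x u * pds k (fun v => (fformI x v).det) u := by
    intro k
    have hKd : DifferentiableAt ℝ (gaussCurv x) u :=
      hDd.mul (DifferentiableAt.inv (h := fun v => (fformI x v).det) hGGd hG.ne')
    have h := pds_mul' k hKd hGGd
    have h2 : pds k (fun v => gaussCurv x v * (fformI x v).det) u
        = pds k (fun v => (fformII x v).det) u := by
      apply pds_congr'
      filter_upwards [hGGd.continuousAt.eventually_ne hG.ne'] with v hv
      exact div_mul_cancel₀ _ hv
    rw [h2] at h
    linarith
  have hKval : gaussCurv x u * (fformI x u).det = (fformII x u).det :=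
    div_mul_cancel₀ _ hG.ne'
  -- the density
  set σ : Param → ℝ := fun v => (Real.sqrt ((fformII x v).det))⁻¹ with hσ
  have hσd : DifferentiableAt ℝ σ u := (hDd.sqrt hD.ne').inv (Real.sqrt_pos.2 hD).ne'
  have hσσ : ∀ v ∈ U, σ v * σ v * (fformII x v).det = 1 := by
    intro v hv
    simp only [hσ]
    rw [← mul_inv, Real.mul_self_sqrt (hDpos v hv).le, inv_mul_cancel₀ (hDpos v hv).ne']
  have hσp : ∀ k, 2 * (fformII x u).det * pds k σ u
      = - σ u * pds k (fun v => (fformII x v).det) u := by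
    intro k
    have h := pds_mul' k (hmul hσd hσd) hDd
    have h2 : pds k (fun v => σ v * σ v * (fformII x v).det) u = 0 := by
      rw [pds_congr' (h := fun _ => 1) (hev.mono hσσ), pds_const']
    have h3 : pds k (fun v => σ v * σ v) u = σ u * pds k σ u + σ u * pds k σ u := pds_mul' k hσd hσd
    rw [h2, h3] at h
    have hne : σ u ≠ 0 := (inv_pos.2 (Real.sqrt_pos.2 hD)).ne'
    apply mul_left_cancel₀ hne
    linarith
  have hAd : ∀ i j, DifferentiableAt ℝ (fun v => (fformII x v).adjugate i j) u := by
    intro i j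
    simp only [Matrix.adjugate_fin_two]
    fin_cases i <;> fin_cases j <;> simp
    · exact hBd 1 1
    · exact hBd 0 1
    · exact hBd 1 0
    · exact hBd 0 0
  have hterm : ∀ i j, pd i (fun v => (Real.sqrt |(fformII x v).det| * (fformII x v)⁻¹ i j)
        • pd j x v) u
      = (σ u * (fformII x u).adjugate i j) • pd i (pd j x) u
        + (σ u * pds i (fun v => (fformII x v).adjugate i j) u
          + (fformII x u).adjugate i j * pds i σ u) • pd j x u := by
    intro i j
    rw [← pds_mul' i hσd (hAd i j), ← pd_smul' i (hmul hσd (hAd i j)) (hpd j)]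
    apply pd_congr'
    filter_upwards [hev] with v hv
    have hs := Real.sqrt_pos.2 (hDpos v hv)
    congr 1
    rw [inv_two, abs_of_pos (hDpos v hv)]
    simp only [hσ]
    rw [← mul_assoc]
    congr 1
    have := Real.mul_self_sqrt (hDpos v hv).le
    apply eq_inv_of_mul_eq_one_left
    rw [mul_right_comm, this, mul_inv_cancel₀ (hDpos v hv).ne']
  have hσu : (Real.sqrt |(fformII x u).det|)⁻¹ = σ u := by
    simp only [hσ]; rw [abs_of_pos hD]
  rw [beltrami1_III _ (hW u hu) hD.ne' horth hwein hsymm]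
  unfold beltrami2
  simp only [hterm, hσu]
  simp only [inv_two]
  have ha00 : ∀ v, (fformII x v).adjugate 0 0 = fformII x v 1 1 := by
    intro v; simp [Matrix.adjugate_fin_two]
  have ha01 : ∀ v, (fformII x v).adjugate 0 1 = - fformII x v 0 1 := by
    intro v; simp [Matrix.adjugate_fin_two]
  have ha10 : ∀ v, (fformII x v).adjugate 1 0 = - fformII x v 1 0 := by
    intro v; simp [Matrix.adjugate_fin_two]
  have ha11 : ∀ v, (fformII x v).adjugate 1 1 = fformII x v 0 0 := by
    intro v; simp [Matrix.adjugate_fin_two]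
  simp only [Fin.sum_univ_two, ha00, ha01, ha10, ha11, pds_neg', hBps, hBsymm u hu]
  -- frame components
  obtain ⟨P0, P1, hP⟩ := frame_exists (n := gaussMap x u) (hW u hu) rfl (pd 0 (pd 0 x) u)
  obtain ⟨Q0, Q1, hQ⟩ := frame_exists (n := gaussMap x u) (hW u hu) rfl (pd 0 (pd 1 x) u)
  obtain ⟨R0, R1, hR⟩ := frame_exists (n := gaussMap x u) (hW u hu) rfl (pd 1 (pd 1 x) u)
  change _ = _ + fformII x u 0 0 • _ at hP
  change _ = _ + fformII x u 0 1 • _ at hQ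
  change _ = _ + fformII x u 1 1 • _ at hR
  have hdn : ∀ i j, dot3 (pd j x u) (pd i (gaussMap x) u) = - fformII x u i j := by
    intro i j
    rw [dot3_comm']
    simp only [fformII, Matrix.of_apply, hwein, neg_neg]
  have hnn : ∀ i, dot3 (gaussMap x u) (pd i (gaussMap x) u) = 0 := fun i => by
    rw [dot3_comm', horth]
  have hnx : ∀ i, dot3 (gaussMap x u) (pd i x u) = 0 := fun i => by
    rw [dot3_comm', gauss_orth]
  have hgs : fformI x u 1 0 = fformI x u 0 1 := by
    simp only [fformI, Matrix.of_apply, dot3_comm']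
  have hgI : ∀ i j, dot3 (pd i x u) (pd j x u) = fformI x u i j := fun i j => rfl
  -- Codazzi in the frame
  rw [hP, hQ] at hcod1
  rw [hR, hQ] at hcod2
  simp only [dot3_add_left, dot3_smul_left, hdn, hnn, hBsymm u hu] at hcod1 hcod2
  -- derivative of det g in the frame
  have hG0 : pds 0 (fun v => (fformI x v).det) u = 2 * (fformI x u).det * (P0 + Q1) := by
    rw [hGdet 0]
    simp only [hGp]
    rw [dot3_comm' (pd 1 x u) (pd 0 (pd 1 x) u), dot3_comm' (pd 0 x u) (pd 0 (pd 0 x) u),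
      dot3_comm' (pd 1 x u) (pd 0 (pd 0 x) u), dot3_comm' (pd 0 x u) (pd 0 (pd 1 x) u), hP, hQ]
    simp only [dot3_add_left, dot3_smul_left, hnx, hgI, hgs, Matrix.det_fin_two]
    ring
  have hG1 : pds 1 (fun v => (fformI x v).det) u = 2 * (fformI x u).det * (Q0 + R1) := by
    rw [hGdet 1]
    simp only [hGp, ← hsymm]
    rw [dot3_comm' (pd 1 x u) (pd 1 (pd 1 x) u), dot3_comm' (pd 0 x u) (pd 0 (pd 1 x) u),
      dot3_comm' (pd 1 x u) (pd 0 (pd 1 x) u), dot3_comm' (pd 0 x u) (pd 1 (pd 1 x) u), hR, hQ]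
    simp only [dot3_add_left, dot3_smul_left, hnx, hgI, hgs, Matrix.det_fin_two]
    ring
  have hK0 := hK 0
  have hK1 := hK 1
  have hs0 := hσp 0
  have hs1 := hσp 1
  have hss := hσσ u hu
  rw [hG0] at hK0
  rw [hG1] at hK1
  have hDet : (fformII x u).det = fformII x u 0 0 * fformII x u 1 1
      - fformII x u 0 1 * fformII x u 0 1 := by
    rw [Matrix.det_fin_two, hBsymm u hu]
  rw [← hsymm, hP, hQ, hR]
  clear_value σ
  have hKpos : gaussCurv x u ≠ 0 := by
    intro h; rw [h, zero_mul] at hKval; exact hD.ne hKval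
  generalize (fformII x u).det = D at *
  generalize (fformI x u).det = G at *
  generalize gaussCurv x u = K at *
  generalize pds 0 (gaussCurv x) u = K0 at *
  generalize pds 1 (gaussCurv x) u = K1 at *
  generalize pds 0 (fun v => (fformII x v).det) u = D0 at *
  generalize pds 1 (fun v => (fformII x v).det) u = D1 at *
  generalize pds 0 σ u = s0 at *
  generalize pds 1 σ u = s1 at *
  generalize σ u = s at *
  generalize pds 1 (fun v => fformII x v 0 0) u = b001 at *
  generalize pds 0 (fun v => fformII x v 0 1) u = b010 at *
  generalize pds 1 (fun v => fformII x v 0 1) u = b011 at *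
  generalize pds 0 (fun v => fformII x v 1 1) u = b110 at *
  generalize fformII x u 0 0 = p at *
  generalize fformII x u 0 1 = q at *
  generalize fformII x u 1 1 = r at *
  ext k
  simp only [Pi.add_apply, Pi.smul_apply, Pi.neg_apply, Pi.sub_apply, smul_eq_mul]
  generalize pd 0 x u k = a
  generalize pd 1 x u k = c
  generalize gaussMap x u k = m
  have hDi : D⁻¹ = s * s := inv_eq_of_mul_eq_one_left hss
  have hD0 := hD.ne'
  have hG0 := hG.ne'
  have hs0' : s0 = -(s * s * s * D0) / 2 := by
    apply mul_left_cancel₀ (mul_ne_zero two_ne_zero hD0)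
    linear_combination hs0 + s * D0 * hss
  have hs1' : s1 = -(s * s * s * D1) / 2 := by
    apply mul_left_cancel₀ (mul_ne_zero two_ne_zero hD0)
    linear_combination hs1 + s * D1 * hss
  have hk0 : 1 / (2 * K) * K0 = s * s * D0 / 2 - (P0 + Q1) := by
    rw [← hDi, ← hKval]; field_simp; linear_combination hK0
  have hk1 : 1 / (2 * K) * K1 = s * s * D1 / 2 - (Q0 + R1) := by
    rw [← hDi, ← hKval]; field_simp; linear_combination hK1
  rw [hDi, hs0', hs1']
  rw [hDet] at hss
  linear_combination (-2 * m) * hss - s * s * a * hcod2 - s * s * c * hcod1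
    - s * s * (r * a - q * c) * hk0 - s * s * (-q * a + p * c) * hk1
end
end

section
/- The Gauss map of M satisfies Δ^{II} n = (1/(2K)) ∇^{I}(K, x) + 2H n on U. -/
open Matrix

noncomputable section

open scoped ContDiff

lemma h_pd_apply {f : Param → Vec3} {u : Param} (hf : DifferentiableAt ℝ f u) (i : Fin 2)
    (k : Fin 3) : pd i f u k = pds i (fun v => f v k) u := by
  simp [pd, pds, fderiv_apply hf k]

lemma h_pds_mul {f g : Param → ℝ} {u : Param} (hf : DifferentiableAt ℝ f u)
    (hg : DifferentiableAt ℝ g u) (i : Fin 2) :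
    pds i (fun v => f v * g v) u = f u * pds i g u + g u * pds i f u := by
  simp [pds, fderiv_fun_mul hf hg]

lemma h_pd_add {f g : Param → Vec3} {u : Param} (hf : DifferentiableAt ℝ f u)
    (hg : DifferentiableAt ℝ g u) (i : Fin 2) :
    pd i (fun v => f v + g v) u = pd i f u + pd i g u := by
  simp [pd, fderiv_fun_add hf hg]

lemma h_pd_smul {f : Param → ℝ} {g : Param → Vec3} {u : Param} (hf : DifferentiableAt ℝ f u)
    (hg : DifferentiableAt ℝ g u) (i : Fin 2) :
    pd i (fun v => f v • g v) u = f u • pd i g u + pds i f u • g u := by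
  simp [pd, pds, fderiv_fun_smul hf hg]

lemma h_pds_dot {f g : Param → Vec3} {u : Param} (hf : DifferentiableAt ℝ f u)
    (hg : DifferentiableAt ℝ g u) (i : Fin 2) :
    pds i (fun v => dot3 (f v) (g v)) u = dot3 (pd i f u) (g u) + dot3 (f u) (pd i g u) := by
  have hf' := differentiableAt_pi.1 hf
  have hg' := differentiableAt_pi.1 hg
  have : fderiv ℝ (fun v => dot3 (f v) (g v)) u
      = ∑ k, (f u k • fderiv ℝ (fun v => g v k) u + g u k • fderiv ℝ (fun v => f v k) u) := by
    unfold dot3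
    rw [fderiv_fun_sum (fun k _ => (hf' k).fun_mul (hg' k))]
    exact Finset.sum_congr rfl fun k _ => fderiv_fun_mul (hf' k) (hg' k)
  rw [pds, this]
  simp only [pds, dot3, h_pd_apply hf, h_pd_apply hg]
  simp [Fin.sum_univ_three]
  ring

lemma h_pd_cross {f g : Param → Vec3} {u : Param} (hf : DifferentiableAt ℝ f u)
    (hg : DifferentiableAt ℝ g u) (i : Fin 2) :
    pd i (fun v => crossProduct (f v) (g v)) u
      = crossProduct (pd i f u) (g u) + crossProduct (f u) (pd i g u) := by
  have hf' := differentiableAt_pi.1 hf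
  have hg' := differentiableAt_pi.1 hg
  have key : ∀ a b c d : Fin 3, pds i (fun v => f v a * g v b - f v c * g v d) u
      = (f u a * pd i g u b + g u b * pd i f u a) - (f u c * pd i g u d + g u d * pd i f u c) := by
    intro a b c d
    rw [h_pd_apply hf, h_pd_apply hg, h_pd_apply hf, h_pd_apply hg,
      ← h_pds_mul (hf' _) (hg' _), ← h_pds_mul (hf' _) (hg' _)]
    simp [pds, fderiv_fun_sub ((hf' a).fun_mul (hg' b)) ((hf' c).fun_mul (hg' d))]
  have hd : DifferentiableAt ℝ (fun v => crossProduct (f v) (g v)) u := by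
    rw [differentiableAt_pi]
    intro k
    fin_cases k <;> simp [cross_apply] <;>
      exact ((hf' _).mul (hg' _)).sub ((hf' _).mul (hg' _))
  ext k
  rw [h_pd_apply hd]
  fin_cases k <;> simp only [cross_apply] <;> simp <;> rw [key] <;> ring

lemma h_pd_congr {f g : Param → Vec3} {u : Param} (h : f =ᶠ[nhds u] g) (i : Fin 2) :
    pd i f u = pd i g u := by simp [pd, h.fderiv_eq]

lemma h_pds_congr {f g : Param → ℝ} {u : Param} (h : f =ᶠ[nhds u] g) (i : Fin 2) :
    pds i f u = pds i g u := by simp [pds, h.fderiv_eq]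

lemma h_cd_pd {f : Param → Vec3} {u : Param} (hf : ContDiffAt ℝ ∞ f u) (i : Fin 2) :
    ContDiffAt ℝ ∞ (pd i f) u := by
  unfold pd
  exact (hf.fderiv_right (by simp)).clm_apply contDiffAt_const

lemma h_cd_dot {f g : Param → Vec3} {u : Param} (hf : ContDiffAt ℝ ∞ f u)
    (hg : ContDiffAt ℝ ∞ g u) : ContDiffAt ℝ ∞ (fun v => dot3 (f v) (g v)) u := by
  unfold dot3
  exact ContDiffAt.sum fun k _ => (contDiffAt_pi.1 hf k).mul (contDiffAt_pi.1 hg k)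

lemma h_cd_cross {f g : Param → Vec3} {u : Param} (hf : ContDiffAt ℝ ∞ f u)
    (hg : ContDiffAt ℝ ∞ g u) : ContDiffAt ℝ ∞ (fun v => crossProduct (f v) (g v)) u := by
  have hf' := contDiffAt_pi.1 hf
  have hg' := contDiffAt_pi.1 hg
  rw [contDiffAt_pi]
  intro k
  fin_cases k <;> simp [cross_apply] <;>
    exact ((hf' _).mul (hg' _)).sub ((hf' _).mul (hg' _))

lemma h_symm {f : Param → Vec3} {u : Param} (hf : ContDiffAt ℝ ∞ f u) (i j : Fin 2) :
    pd i (pd j f) u = pd j (pd i f) u := by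
  have hs : IsSymmSndFDerivAt ℝ f u := hf.isSymmSndFDerivAt (by
    simp only [minSmoothness_of_isRCLikeNormedField]; exact WithTop.coe_le_coe.2 (le_top : (2 : ℕ∞) ≤ ⊤))
  have hd : DifferentiableAt ℝ (fderiv ℝ f) u :=
    (hf.fderiv_right (m := ∞) (by simp)).differentiableAt (by simp)
  have key : ∀ i j : Fin 2, pd i (pd j f) u
      = fderiv ℝ (fderiv ℝ f) u (Pi.single i 1) (Pi.single j 1) := by
    intro i j
    unfold pd
    rw [fderiv_clm_apply hd (differentiableAt_const _)]
    simp
  rw [key, key]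
  exact hs _ _

lemma h_dot_pos {c : Vec3} (h : c ≠ 0) : 0 < dot3 c c := by
  have : dot3 c c = dotProduct c c := rfl
  rw [this]
  exact lt_of_le_of_ne (Finset.sum_nonneg fun k _ => mul_self_nonneg _)
    (fun h' => h (dotProduct_self_eq_zero.1 h'.symm))

lemma h_dot_cross (p q : Vec3) : dot3 (crossProduct p q) (crossProduct p q)
    = dot3 p p * dot3 q q - dot3 p q * dot3 q p := by
  simp [dot3, cross_apply, Fin.sum_univ_three]; ring

lemma h_P (p q n : Vec3) (W : ℝ) (hn : W • n = crossProduct p q) :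
    W • crossProduct q n = dot3 q q • p - dot3 p q • q := by
  rw [← LinearMap.map_smul, hn]
  ext k; fin_cases k <;> simp [dot3, cross_apply, Fin.sum_univ_three] <;> ring

lemma h_Q (p q n : Vec3) (W : ℝ) (hn : W • n = crossProduct p q) :
    W • crossProduct n p = dot3 p p • q - dot3 p q • p := by
  rw [← LinearMap.smul_apply, ← LinearMap.map_smul, hn]
  ext k; fin_cases k <;> simp [dot3, cross_apply, Fin.sum_univ_three] <;> ring

lemma h_decomp (p q m : Vec3) : dot3 (crossProduct p q) (crossProduct p q) • m =
    dot3 m p • (dot3 q q • p - dot3 p q • q) + dot3 m q • (dot3 p p • q - dot3 p q • p)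
      + dot3 m (crossProduct p q) • crossProduct p q := by
  ext k; fin_cases k <;> simp [dot3, cross_apply, Fin.sum_univ_three] <;> ring

lemma h_dot_smul (m n : Vec3) (W : ℝ) : dot3 m (W • n) = W * dot3 m n := by
  simp [dot3, Fin.sum_univ_three]; ring

lemma h_wein (p q n m : Vec3) (W a b : ℝ) (hW : W ≠ 0) (hn : W • n = crossProduct p q)
    (hW2 : W ^ 2 = dot3 (crossProduct p q) (crossProduct p q))
    (h0 : dot3 m n = 0) (ha : dot3 m p = -a) (hb : dot3 m q = -b) :
    W • m = -(a • crossProduct q n + b • crossProduct n p) := by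
  have h := h_decomp p q m
  rw [← hW2, ← hn, h_dot_smul, h0, ← h_P p q n W hn, ← h_Q p q n W hn, ha, hb] at h
  apply smul_right_injective _ hW
  simp only
  rw [smul_smul, ← sq, h]
  module

lemma h_div (p q n m0 m1 : Vec3) (W b00 b01 b10 b11 : ℝ) (hW : W ≠ 0)
    (hn : W • n = crossProduct p q)
    (h0 : W • m0 = -(b00 • crossProduct q n + b01 • crossProduct n p))
    (h1 : W • m1 = -(b10 • crossProduct q n + b11 • crossProduct n p)) :
    W • (crossProduct q m0 + crossProduct m1 p)
      = (b00 * dot3 q q - (b01 + b10) * dot3 p q + b11 * dot3 p p) • n := by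
  have hP := h_P p q n W hn
  have hQ := h_Q p q n W hn
  have e0 : (W * W) • m0 = -(b00 • (dot3 q q • p - dot3 p q • q)
      + b01 • (dot3 p p • q - dot3 p q • p)) := by
    rw [mul_smul, h0, ← hP, ← hQ]; module
  have e1 : (W * W) • m1 = -(b10 • (dot3 q q • p - dot3 p q • q)
      + b11 • (dot3 p p • q - dot3 p q • p)) := by
    rw [mul_smul, h1, ← hP, ← hQ]; module
  apply smul_right_injective _ hW
  simp only
  rw [smul_smul, smul_add, ← LinearMap.map_smul, ← LinearMap.smul_apply, ← LinearMap.map_smul,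
    e0, e1, smul_comm W, hn]
  generalize dot3 q q = A
  generalize dot3 p p = B
  generalize dot3 p q = C
  ext k; fin_cases k <;> simp [cross_apply] <;> ring

lemma h_inv (A : Matrix (Fin 2) (Fin 2) ℝ) :
    A⁻¹ = !![A.det⁻¹ * A 1 1, -(A.det⁻¹ * A 0 1); -(A.det⁻¹ * A 1 0), A.det⁻¹ * A 0 0] := by
  rw [Matrix.inv_def, Ring.inverse_eq_inv', Matrix.adjugate_fin_two]
  ext i j; fin_cases i <;> fin_cases j <;> simp

/-- `Δ^{II} n = (1/(2K)) ∇^{I}(K, x) + 2H n` on `U`. -/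
theorem stmt5 (U : Set Param) (x : Param → Vec3)
    (hU : IsOpen U) (hUconn : IsConnected U)
    (hx : ContDiffOn ℝ (⊤ : ℕ∞) x U) (himm : Immersed x U)
    (hell : ∀ u ∈ U, (fformII x u).PosDef) :
    ∀ u ∈ U,
      beltrami2 (fformII x) (gaussMap x) u =
        (1 / (2 * gaussCurv x u)) • beltrami1 (fformI x) (gaussCurv x) x u
          + (2 * meanCurv x u) • gaussMap x u := by
  have hxa : ∀ u ∈ U, ContDiffAt ℝ ∞ x u := fun u hu => hx.contDiffAt (hU.mem_nhds hu)
  have hD : ∀ {E : Type} [NormedAddCommGroup E] [NormedSpace ℝ E] {f : Param → E} {u : Param},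
      ContDiffAt ℝ ∞ f u → DifferentiableAt ℝ f u := fun h => h.differentiableAt (by simp)
  -- the area element
  set W : Param → ℝ := fun u => norm3 (crossProduct (pd 0 x u) (pd 1 x u)) with hWdef
  have hcpos : ∀ u ∈ U, 0 < dot3 (crossProduct (pd 0 x u) (pd 1 x u))
      (crossProduct (pd 0 x u) (pd 1 x u)) := fun u hu =>
    h_dot_pos (crossProduct_ne_zero_iff_linearIndependent.2 (himm u hu))
  have hWpos : ∀ u ∈ U, 0 < W u := fun u hu => Real.sqrt_pos.2 (hcpos u hu)
  have hW2 : ∀ u ∈ U, W u ^ 2 = dot3 (crossProduct (pd 0 x u) (pd 1 x u))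
      (crossProduct (pd 0 x u) (pd 1 x u)) := fun u hu => Real.sq_sqrt (hcpos u hu).le
  have hn : ∀ u ∈ U, W u • gaussMap x u = crossProduct (pd 0 x u) (pd 1 x u) := by
    intro u hu
    have : gaussMap x u = (W u)⁻¹ • crossProduct (pd 0 x u) (pd 1 x u) := rfl
    rw [this, smul_smul, mul_inv_cancel₀ (hWpos u hu).ne', one_smul]
  have hgdet : ∀ u ∈ U, (fformI x u).det = W u ^ 2 := by
    intro u hu
    rw [hW2 u hu, h_dot_cross, Matrix.det_fin_two]; rfl
  -- smoothness
  have hcW : ∀ u ∈ U, ContDiffAt ℝ ∞ W u := fun u hu =>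
    (h_cd_dot (h_cd_cross (h_cd_pd (hxa u hu) 0) (h_cd_pd (hxa u hu) 1))
      (h_cd_cross (h_cd_pd (hxa u hu) 0) (h_cd_pd (hxa u hu) 1))).sqrt (hcpos u hu).ne'
  have hcn : ∀ u ∈ U, ContDiffAt ℝ ∞ (gaussMap x) u := fun u hu =>
    ((hcW u hu).inv (hWpos u hu).ne').smul
      (h_cd_cross (h_cd_pd (hxa u hu) 0) (h_cd_pd (hxa u hu) 1))
  have hcb : ∀ u ∈ U, ∀ i j, ContDiffAt ℝ ∞ (fun v => fformII x v i j) u := fun u hu i j =>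
    h_cd_dot (h_cd_pd (h_cd_pd (hxa u hu) j) i) (hcn u hu)
  have hcg : ∀ u ∈ U, ∀ i j, ContDiffAt ℝ ∞ (fun v => fformI x v i j) u := fun u hu i j =>
    h_cd_dot (h_cd_pd (hxa u hu) i) (h_cd_pd (hxa u hu) j)
  have hcbd : ∀ u ∈ U, ContDiffAt ℝ ∞ (fun v => (fformII x v).det) u := by
    intro u hu
    simp only [Matrix.det_fin_two]
    exact ((hcb u hu _ _).mul (hcb u hu _ _)).sub ((hcb u hu _ _).mul (hcb u hu _ _))
  have hcgd : ∀ u ∈ U, ContDiffAt ℝ ∞ (fun v => (fformI x v).det) u := by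
    intro u hu
    simp only [Matrix.det_fin_two]
    exact ((hcg u hu _ _).mul (hcg u hu _ _)).sub ((hcg u hu _ _).mul (hcg u hu _ _))
  have hbd : ∀ u ∈ U, 0 < (fformII x u).det := fun u hu => (hell u hu).det_pos
  have hgd : ∀ u ∈ U, 0 < (fformI x u).det := fun u hu => by
    rw [hgdet u hu]; exact pow_pos (hWpos u hu) 2
  have hK : ∀ u ∈ U, 0 < gaussCurv x u := fun u hu => div_pos (hbd u hu) (hgd u hu)
  have hcK : ∀ u ∈ U, ContDiffAt ℝ ∞ (gaussCurv x) u := fun u hu =>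
    (hcbd u hu).div (hcgd u hu) (hgd u hu).ne'
  set s : Param → ℝ := fun u => Real.sqrt (gaussCurv x u) with hsdef
  have hcs : ∀ u ∈ U, ContDiffAt ℝ ∞ s u := fun u hu => (hcK u hu).sqrt (hK u hu).ne'
  have hspos : ∀ u ∈ U, 0 < s u := fun u hu => Real.sqrt_pos.2 (hK u hu)
  have hs2 : ∀ u ∈ U, s u * s u = gaussCurv x u := fun u hu => Real.mul_self_sqrt (hK u hu).le
  have hbds : ∀ u ∈ U, (fformII x u).det = (s u * W u) ^ 2 := by
    intro u hu
    rw [mul_pow, sq (s u), hs2 u hu, ← hgdet u hu, gaussCurv, div_mul_cancel₀ _ (hgd u hu).ne']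
  have hsqrt : ∀ u ∈ U, Real.sqrt |(fformII x u).det| = s u * W u := by
    intro u hu
    rw [abs_of_pos (hbd u hu), hbds u hu, Real.sqrt_sq (mul_pos (hspos u hu) (hWpos u hu)).le]
  -- orthogonality relations
  have hnp : ∀ u ∈ U, ∀ j, dot3 (gaussMap x u) (pd j x u) = 0 := by
    intro u hu j
    have : gaussMap x u = (W u)⁻¹ • crossProduct (pd 0 x u) (pd 1 x u) := rfl
    rw [this]
    fin_cases j <;> simp [dot3, cross_apply, Fin.sum_univ_three] <;> ring
  have hnn : ∀ u ∈ U, dot3 (gaussMap x u) (gaussMap x u) = 1 := by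
    intro u hu
    have h := hW2 u hu
    rw [← hn u hu] at h
    have h2 : dot3 (W u • gaussMap x u) (W u • gaussMap x u)
        = W u ^ 2 * dot3 (gaussMap x u) (gaussMap x u) := by
      simp [dot3, Fin.sum_univ_three]; ring
    rw [h2] at h
    have := pow_ne_zero 2 (hWpos u hu).ne'
    exact mul_left_cancel₀ this (by rw [← h, mul_one])
  have hev : ∀ u ∈ U, ∀ᶠ v in nhds u, v ∈ U := fun u hu => hU.mem_nhds hu
  have hmn : ∀ u ∈ U, ∀ i, dot3 (pd i (gaussMap x) u) (gaussMap x u) = 0 := by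
    intro u hu i
    have h := h_pds_dot (hD (hcn u hu)) (hD (hcn u hu)) i
    rw [h_pds_congr (g := fun _ => (1 : ℝ)) ((hev u hu).mono fun v hv => hnn v hv)] at h
    have h1 : pds i (fun _ => (1 : ℝ)) u = 0 := by simp [pds]
    have h2 : dot3 (gaussMap x u) (pd i (gaussMap x) u)
        = dot3 (pd i (gaussMap x) u) (gaussMap x u) := by
      simp only [dot3, mul_comm]
    rw [h1, h2] at h
    linarith
  have hmp : ∀ u ∈ U, ∀ i j, dot3 (pd i (gaussMap x) u) (pd j x u) = -fformII x u i j := by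
    intro u hu i j
    have h := h_pds_dot (hD (hcn u hu)) (hD (h_cd_pd (hxa u hu) j)) i
    rw [h_pds_congr (g := fun _ => (0 : ℝ)) ((hev u hu).mono fun v hv => hnp v hv j)] at h
    have h1 : pds i (fun _ => (0 : ℝ)) u = 0 := by simp [pds]
    have h2 : dot3 (gaussMap x u) (pd i (pd j x) u) = fformII x u i j := by
      simp only [fformII, Matrix.of_apply, dot3, mul_comm]
    rw [h1, h2] at h
    linarith
  have hwe : ∀ u ∈ U, ∀ i, W u • pd i (gaussMap x) u
      = -(fformII x u i 0 • crossProduct (pd 1 x u) (gaussMap x u)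
        + fformII x u i 1 • crossProduct (gaussMap x u) (pd 0 x u)) := fun u hu i =>
    h_wein _ _ _ _ _ _ _ (hWpos u hu).ne' (hn u hu) (hW2 u hu) (hmn u hu i) (hmp u hu i 0)
      (hmp u hu i 1)
  have hbs : ∀ u ∈ U, fformII x u 1 0 = fformII x u 0 1 := by
    intro u hu
    simp only [fformII, Matrix.of_apply, h_symm (hxa u hu) 1 0]
  -- the two fluxes
  have hF0 : ∀ u ∈ U, (Real.sqrt |(fformII x u).det| * (fformII x u)⁻¹ 0 0) • pd 0 (gaussMap x) u
      + (Real.sqrt |(fformII x u).det| * (fformII x u)⁻¹ 0 1) • pd 1 (gaussMap x) u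
      = (-s u) • crossProduct (pd 1 x u) (gaussMap x u) := by
    intro u hu
    have hs' := (hspos u hu).ne'
    have hW' := (hWpos u hu).ne'
    have hd := hbds u hu
    have hd0 := (hbd u hu).ne'
    rw [hsqrt u hu, h_inv]
    have e0 := hwe u hu 0
    have e1 := hwe u hu 1
    simp only [Matrix.of_apply, Matrix.cons_val', Matrix.cons_val_zero, Matrix.cons_val_one,
      Matrix.cons_val_fin_one]
    have : ∀ a b : ℝ, (s u * W u * a) • pd 0 (gaussMap x) u + (s u * W u * b) • pd 1 (gaussMap x) u
      = (s u * a) • (W u • pd 0 (gaussMap x) u) + (s u * b) • (W u • pd 1 (gaussMap x) u) := by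
      intro a b; module
    rw [this, e0, e1, hbs u hu]
    rw [Matrix.det_fin_two, hbs u hu, ← sq] at hd0 ⊢
    match_scalars <;> field_simp <;> ring
  have hF1 : ∀ u ∈ U, (Real.sqrt |(fformII x u).det| * (fformII x u)⁻¹ 1 0) • pd 0 (gaussMap x) u
      + (Real.sqrt |(fformII x u).det| * (fformII x u)⁻¹ 1 1) • pd 1 (gaussMap x) u
      = (-s u) • crossProduct (gaussMap x u) (pd 0 x u) := by
    intro u hu
    have hs' := (hspos u hu).ne'
    have hW' := (hWpos u hu).ne'
    have hd := hbds u hu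
    have hd0 := (hbd u hu).ne'
    rw [hsqrt u hu, h_inv]
    have e0 := hwe u hu 0
    have e1 := hwe u hu 1
    simp only [Matrix.of_apply, Matrix.cons_val', Matrix.cons_val_zero, Matrix.cons_val_one,
      Matrix.cons_val_fin_one]
    have : ∀ a b : ℝ, (s u * W u * a) • pd 0 (gaussMap x) u + (s u * W u * b) • pd 1 (gaussMap x) u
      = (s u * a) • (W u • pd 0 (gaussMap x) u) + (s u * b) • (W u • pd 1 (gaussMap x) u) := by
      intro a b; module
    rw [this, e0, e1, hbs u hu]
    rw [Matrix.det_fin_two, hbs u hu, ← sq] at hd0 ⊢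
    match_scalars <;> field_simp <;> ring
  intro u hu
  have hs' := (hspos u hu).ne'
  have hW' := (hWpos u hu).ne'
  have dn := hD (hcn u hu)
  have dp := hD (h_cd_pd (hxa u hu) 0)
  have dq := hD (h_cd_pd (hxa u hu) 1)
  have hFd : ∀ i j, DifferentiableAt ℝ (fun v => (Real.sqrt |(fformII x v).det| *
      (fformII x v)⁻¹ i j) • pd j (gaussMap x) v) u := by
    intro i j
    have h1 : DifferentiableAt ℝ (fun v => Real.sqrt |(fformII x v).det|) u :=
      (((hD (hcs u hu)).mul (hD (hcW u hu))).congr_of_eventuallyEq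
        ((hev u hu).mono fun v hv => hsqrt v hv))
    have hdi := (hD (hcbd u hu)).fun_inv (hbd u hu).ne'
    have hdb := fun i j => hD (hcb u hu i j)
    have h2 : DifferentiableAt ℝ (fun v => (fformII x v)⁻¹ i j) u := by
      simp only [h_inv]
      fin_cases i <;> fin_cases j <;> simp
      · exact hdi.fun_mul (hdb 1 1)
      · exact hdi.fun_mul (hdb 0 1)
      · exact hdi.fun_mul (hdb 1 0)
      · exact hdi.fun_mul (hdb 0 0)
    exact (h1.fun_mul h2).fun_smul (hD (h_cd_pd (hcn u hu) j))
  have hns : DifferentiableAt ℝ (fun v => -s v) u := (hD (hcs u hu)).fun_neg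
  have hnsd : ∀ i, pds i (fun v => -s v) u = -pds i s u := by
    intro i; simp [pds]
  have hcr0 := hD (h_cd_cross (h_cd_pd (hxa u hu) 1) (hcn u hu))
  have hcr1 := hD (h_cd_cross (hcn u hu) (h_cd_pd (hxa u hu) 0))
  have hKd : ∀ i, pds i (gaussCurv x) u = 2 * s u * pds i s u := by
    intro i
    rw [h_pds_congr (g := fun v => s v * s v) ((hev u hu).mono fun v hv => (hs2 v hv).symm),
      h_pds_mul (hD (hcs u hu)) (hD (hcs u hu))]
    ring
  have hdiv := h_div _ _ _ _ _ _ _ _ _ _ hW' (hn u hu) (hwe u hu 0) (hwe u hu 1)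
  have hP := h_P _ _ _ _ (hn u hu)
  have hQ := h_Q _ _ _ _ (hn u hu)
  have hL : beltrami2 (fformII x) (gaussMap x) u = (s u * W u)⁻¹ •
      (pds 0 s u • crossProduct (pd 1 x u) (gaussMap x u)
        + pds 1 s u • crossProduct (gaussMap x u) (pd 0 x u)
        + s u • (crossProduct (pd 1 x u) (pd 0 (gaussMap x) u)
          + crossProduct (pd 1 (gaussMap x) u) (pd 0 x u))) := by
    unfold beltrami2
    simp only [Fin.sum_univ_two]
    rw [← h_pd_add (hFd 0 0) (hFd 0 1), ← h_pd_add (hFd 1 0) (hFd 1 1),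
      h_pd_congr ((hev u hu).mono fun v hv => hF0 v hv),
      h_pd_congr ((hev u hu).mono fun v hv => hF1 v hv),
      h_pd_smul hns hcr0, h_pd_smul hns hcr1, h_pd_cross dq dn, h_pd_cross dn dp,
      hsqrt u hu, hnsd, hnsd, h_symm (hxa u hu) 0 1,
      ← cross_anticomm (pd 1 (pd 0 x) u) (gaussMap x u)]
    module
  have hg10 : fformI x u 1 0 = dot3 (pd 0 x u) (pd 1 x u) := by
    simp only [fformI, Matrix.of_apply, dot3, mul_comm]
  have hg01 : fformI x u 0 1 = dot3 (pd 0 x u) (pd 1 x u) := rfl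
  have hg00 : fformI x u 0 0 = dot3 (pd 0 x u) (pd 0 x u) := rfl
  have hg11 : fformI x u 1 1 = dot3 (pd 1 x u) (pd 1 x u) := rfl
  have hR : beltrami1 (fformI x) (gaussCurv x) x u = (2 * s u * (W u)⁻¹) •
      (pds 0 s u • crossProduct (pd 1 x u) (gaussMap x u)
        + pds 1 s u • crossProduct (gaussMap x u) (pd 0 x u)) := by
    have e0 : crossProduct (pd 1 x u) (gaussMap x u) = (W u)⁻¹ • (dot3 (pd 1 x u) (pd 1 x u) •
        pd 0 x u - dot3 (pd 0 x u) (pd 1 x u) • pd 1 x u) := by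
      rw [← hP, smul_smul, inv_mul_cancel₀ hW', one_smul]
    have e1 : crossProduct (gaussMap x u) (pd 0 x u) = (W u)⁻¹ • (dot3 (pd 0 x u) (pd 0 x u) •
        pd 1 x u - dot3 (pd 0 x u) (pd 1 x u) • pd 0 x u) := by
      rw [← hQ, smul_smul, inv_mul_cancel₀ hW', one_smul]
    unfold beltrami1
    rw [h_inv, hgdet u hu, hg10, hg01, hg00, hg11, e0, e1]
    simp only [Fin.sum_univ_two, hKd, Matrix.of_apply, Matrix.cons_val', Matrix.cons_val_zero,
      Matrix.cons_val_one, Matrix.cons_val_fin_one]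
    match_scalars <;> field_simp <;> ring
  have hH : (W u)⁻¹ • (crossProduct (pd 1 x u) (pd 0 (gaussMap x) u)
          + crossProduct (pd 1 (gaussMap x) u) (pd 0 x u)) = (2 * meanCurv x u) • gaussMap x u := by
    have : crossProduct (pd 1 x u) (pd 0 (gaussMap x) u)
          + crossProduct (pd 1 (gaussMap x) u) (pd 0 x u) = (W u)⁻¹ • W u •
          (crossProduct (pd 1 x u) (pd 0 (gaussMap x) u)
          + crossProduct (pd 1 (gaussMap x) u) (pd 0 x u)) := by
      rw [smul_smul, inv_mul_cancel₀ hW', one_smul]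
    rw [this, hdiv, smul_smul, smul_smul]
    congr 1
    unfold meanCurv
    rw [h_inv, hgdet u hu, hg10, hg01, hg00, hg11]
    simp only [Fin.sum_univ_two, Matrix.of_apply, Matrix.cons_val', Matrix.cons_val_zero,
      Matrix.cons_val_one, Matrix.cons_val_fin_one]
    field_simp
    ring
  rw [hL, hR, ← hH, ← hs2 u hu]
  match_scalars <;> field_simp
end
end
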